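/- There exists a constant c > 0 independent of the mesh size h and the spline degree p such that the L2-orthogonal projector Q_0 onto S_0 is H^1-stable on the spline space: |Q_0 u|_1 ≤ c |u|_1 for all u ∈ S. -/

import Mathlib

noncomputable section

open MeasureTheory Set

namespace SplineMG

/-- The `j`-th piece of the uniform partition of `[0,1]` into `m` subintervals of
length `h = 1/m`; the first and last pieces are extended to `-∞` resp. `+∞`
(the spline is extended polynomially outside `[0,1]`). -/
def pieceSet (m j : ℕ) : Set ℝ :=
  (if j = 0 then Iic ((1 : ℝ) / m) else Icc ((j : ℝ) / m) (((j : ℝ) + 1) / m)) ∪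
  (if j = m - 1 then Ici (((m : ℝ) - 1) / m) else ∅)

/-- `u : ℝ → ℝ` belongs to the univariate spline space `S` of degree `p` and maximal
smoothness `C^{p-1}` on the uniform partition of `(0,1)` into `m` intervals of
length `h = 1/m`. -/
def IsSpline (m p : ℕ) (u : ℝ → ℝ) : Prop :=
  ContDiffOn ℝ (p - 1 : ℕ) u (Ioo (0 : ℝ) 1) ∧
  ∀ j < m, ∃ q : Polynomial ℝ, q.natDegree ≤ p ∧ ∀ x ∈ pieceSet m j, u x = q.eval x

/-- `u` belongs to the subspace `S₀` of `S`: all odd derivatives of order `< p`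
vanish at both endpoints. -/
def IsSpline0 (m p : ℕ) (u : ℝ → ℝ) : Prop :=
  IsSpline m p u ∧
  ∀ l : ℕ, 2 * l + 1 < p →
    iteratedDeriv (2 * l + 1) u 0 = 0 ∧ iteratedDeriv (2 * l + 1) u 1 = 0

/-- The `L²(0,1)` inner product. -/
def ip0 (u v : ℝ → ℝ) : ℝ := ∫ x in Ioo (0 : ℝ) 1, u x * v x

/-- The squared `L²(0,1)` norm `‖u‖₀²`. -/
def l2normSq (u : ℝ → ℝ) : ℝ := ∫ x in Ioo (0 : ℝ) 1, u x ^ 2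

/-- The `L²(0,1)` norm `‖u‖₀`. -/
def l2norm (u : ℝ → ℝ) : ℝ := Real.sqrt (l2normSq u)

/-- The squared `H¹(0,1)` seminorm `|u|₁²`. -/
def h1semiSq (u : ℝ → ℝ) : ℝ := ∫ x in Ioo (0 : ℝ) 1, deriv u x ^ 2

/-- The `H¹(0,1)` seminorm `|u|₁`. -/
def h1semi (u : ℝ → ℝ) : ℝ := Real.sqrt (h1semiSq u)

/-- The squared full `H¹(0,1)` norm. -/
def h1normSq (u : ℝ → ℝ) : ℝ := l2normSq u + h1semiSq u

/-- `u` belongs to `S₁`, the `L²(0,1)`-orthogonal complement of `S₀` in `S`. -/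
def IsSpline1 (m p : ℕ) (u : ℝ → ℝ) : Prop :=
  IsSpline m p u ∧ ∀ v, IsSpline0 m p v → ip0 u v = 0

/-- `v = Q₀ u` is the `L²(0,1)`-orthogonal projection of `u` onto `S₀`. -/
def IsL2Proj0 (m p : ℕ) (u v : ℝ → ℝ) : Prop :=
  IsSpline0 m p v ∧ ∀ w, IsSpline0 m p w → ip0 (u - v) w = 0

/-- The component predicate: `false ↦ S₀`, `true ↦ S₁`. -/
def IsSplineC (m p : ℕ) : Bool → (ℝ → ℝ) → Prop
  | false => IsSpline0 m p
  | true => IsSpline1 m p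

/-- The tensor-product spline space `S^d = S ⊗ ⋯ ⊗ S` on `(0,1)^d`. -/
def TensorSpline (d m p : ℕ) : Submodule ℝ ((Fin d → ℝ) → ℝ) :=
  Submodule.span ℝ {u | ∃ f : Fin d → ℝ → ℝ, (∀ i, IsSpline m p (f i)) ∧
    u = fun x => ∏ i, f i (x i)}

/-- The subspace `S_α = S_{α₁} ⊗ ⋯ ⊗ S_{α_d}` of `S^d`, for `α ∈ {0,1}^d`
(`false ↦ 0`, `true ↦ 1`). -/
def TensorSplineSub (d m p : ℕ) (α : Fin d → Bool) : Submodule ℝ ((Fin d → ℝ) → ℝ) :=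
  Submodule.span ℝ {u | ∃ f : Fin d → ℝ → ℝ, (∀ i, IsSplineC m p (α i) (f i)) ∧
    u = fun x => ∏ i, f i (x i)}

/-- The open unit cube `Ω = (0,1)^d`. -/
def cube (d : ℕ) : Set (Fin d → ℝ) := Set.univ.pi fun _ => Ioo (0 : ℝ) 1

/-- The `i`-th partial derivative. -/
def pd (d : ℕ) (i : Fin d) (u : (Fin d → ℝ) → ℝ) : (Fin d → ℝ) → ℝ :=
  fun x => deriv (fun t => u (Function.update x i t)) (x i)

/-- The `L²(Ω)` inner product on the unit cube. -/
def ipd (d : ℕ) (u v : (Fin d → ℝ) → ℝ) : ℝ := ∫ x in cube d, u x * v x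

/-- The squared `L²(Ω)` norm. -/
def l2normSqD (d : ℕ) (u : (Fin d → ℝ) → ℝ) : ℝ := ∫ x in cube d, u x ^ 2

/-- The bilinear form `a(u,v) = ∫_Ω (∇u·∇v + uv) dx`. -/
def aForm (d : ℕ) (u v : (Fin d → ℝ) → ℝ) : ℝ :=
  ∫ x in cube d, (∑ i, pd d i u x * pd d i v x) + u x * v x

/-- The squared `H¹(Ω)` seminorm. -/
def h1semiSqD (d : ℕ) (u : (Fin d → ℝ) → ℝ) : ℝ :=
  ∫ x in cube d, ∑ i, pd d i u x ^ 2

/-- The squared full `H¹(Ω)` norm. -/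
def h1normSqD (d : ℕ) (u : (Fin d → ℝ) → ℝ) : ℝ := l2normSqD d u + h1semiSqD d u

/-- `v = Q_α u` is the `L²(Ω)`-orthogonal projection of `u` onto `S_α`. -/
def IsL2ProjSub (d m p : ℕ) (α : Fin d → Bool) (u v : (Fin d → ℝ) → ℝ) : Prop :=
  v ∈ TensorSplineSub d m p α ∧ ∀ w ∈ TensorSplineSub d m p α, ipd d (u - v) w = 0

/-- The coarse tensor-product spline space `(S_c)^d` (with `m/2` knot spans of
width `2h` per direction). -/
def TensorSplineCoarse (d m p : ℕ) : Submodule ℝ ((Fin d → ℝ) → ℝ) :=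
  TensorSpline d (m / 2) p

/-- `v = T_c u` is the `a(·,·)`-orthogonal (Galerkin) projection of `u` onto `(S_c)^d`. -/
def IsGalerkinCoarseProj (d m p : ℕ) (u v : (Fin d → ℝ) → ℝ) : Prop :=
  v ∈ TensorSplineCoarse d m p ∧ ∀ w ∈ TensorSplineCoarse d m p, aForm d (u - v) w = 0

end SplineMG

/-!
Let `J g (x) = ∫₀ˣ g` on `L²(0,1)`. Integration by parts makes `J` skew-adjoint up to the rank one
form `⟪f, 1⟫ ⟪1, g⟫`. Starting from the piecewise constants `N₀ = D₀ = V`, put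
`N_{q+1} = ⟨1⟩ + J D_q` and `D_{q+1} = J (N_q ∩ 1^⊥)`; then `S₀` of degree `p` is `N_p`, with
derivatives in `D_{p-1}`. Skew-adjointness carries two estimates from one degree to the next with
unchanged constants, so both only have to be checked on piecewise constants: the approximation
property `inf_v ‖J g - v‖ ≤ h ‖g‖` with `h = 1 / m` (by Aubin–Nitsche duality), and the inverse
inequality `‖g‖ ≤ K ‖c + J g‖` with `K = 4 m`.

Given `u`, let `w ∈ S₀` have as derivative the `L²`-projection of `u'` onto `D_{p-1}`, with the
constant chosen such that `‖u - w‖ ≤ h |u|₁`. Then `|w|₁ ≤ |u|₁`, and for `v = Q₀ u` the inverse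
inequality gives `|v|₁ ≤ |w|₁ + K ‖v - w‖ ≤ |u|₁ + K ‖u - w‖ ≤ (1 + K h) |u|₁ = 5 |u|₁`.
-/

namespace SplineMG

open scoped InnerProductSpace

/-! ### Abstract splines in a Hilbert space -/

section Abstract

variable {H : Type*} [NormedAddCommGroup H] [InnerProductSpace ℝ H]
  {J : H →ₗ[ℝ] H} {e : H} {V W : Submodule ℝ H} {h K : ℝ}

/-- The abstract form of integration by parts `∫ F g + ∫ f G = (∫ f) (∫ g)` for the primitives
`F`, `G` of `f`, `g` vanishing at `0`: here `J` plays the role of integration from `0` and `e`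
that of the constant function `1` on `(0, 1)`. -/
def IntegratesByParts (J : H →ₗ[ℝ] H) (e : H) : Prop :=
  ∀ f g : H, ⟪J f, g⟫_ℝ + ⟪f, J g⟫_ℝ = ⟪f, e⟫_ℝ * ⟪e, g⟫_ℝ

mutual

/-- The abstract spline space of degree `q` over the degree zero space `V` whose elements satisfy
the Neumann-type conditions: odd derivatives vanish at the endpoints. -/
def neumannSpace (J : H →ₗ[ℝ] H) (e : H) (V : Submodule ℝ H) : ℕ → Submodule ℝ H
  | 0 => V
  | q + 1 => (ℝ ∙ e) ⊔ (dirichletSpace J e V q).map J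

/-- The abstract spline space of degree `q` over the degree zero space `V` whose elements satisfy
the Dirichlet-type conditions: even derivatives vanish at the endpoints. For primitives from `0`,
orthogonality of the integrand to `e` is the condition at the right endpoint. -/
def dirichletSpace (J : H →ₗ[ℝ] H) (e : H) (V : Submodule ℝ H) : ℕ → Submodule ℝ H
  | 0 => V
  | q + 1 => (neumannSpace J e V q ⊓ (ℝ ∙ e)ᗮ).map J

end

lemma mem_neumannSpace_succ {q : ℕ} {x : H} :
    x ∈ neumannSpace J e V (q + 1) ↔ ∃ c : ℝ, ∃ g ∈ dirichletSpace J e V q, c • e + J g = x := by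
  simp only [neumannSpace, Submodule.mem_sup, Submodule.mem_span_singleton, Submodule.mem_map,
    exists_exists_eq_and, exists_exists_and_eq_and]

lemma mem_dirichletSpace_succ {q : ℕ} {x : H} :
    x ∈ dirichletSpace J e V (q + 1) ↔ ∃ g ∈ neumannSpace J e V q, ⟪e, g⟫_ℝ = 0 ∧ J g = x := by
  simp only [dirichletSpace, Submodule.mem_map, Submodule.mem_inf,
    Submodule.mem_orthogonal_singleton_iff_inner_right, and_assoc]

lemma mem_neumannSpace_self (heV : e ∈ V) : ∀ q, e ∈ neumannSpace J e V q
  | 0 => by rwa [neumannSpace]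
  | _ + 1 => mem_neumannSpace_succ.2 ⟨1, 0, zero_mem _, by simp⟩

lemma finiteDimensional_neumannSpace_dirichletSpace [FiniteDimensional ℝ V] (q : ℕ) :
    FiniteDimensional ℝ (neumannSpace J e V q) ∧ FiniteDimensional ℝ (dirichletSpace J e V q) := by
  induction q with
  | zero => simp only [neumannSpace, dirichletSpace]; exact ⟨‹_›, ‹_›⟩
  | succ q ih =>
    obtain ⟨ihN, ihD⟩ := ih
    rw [neumannSpace, dirichletSpace]
    have := Submodule.finiteDimensional_inf_left (neumannSpace J e V q) (ℝ ∙ e)ᗮ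
    exact ⟨Submodule.finite_sup _ _, Module.Finite.map _ _⟩

instance [FiniteDimensional ℝ V] (q : ℕ) : FiniteDimensional ℝ (neumannSpace J e V q) :=
  (finiteDimensional_neumannSpace_dirichletSpace q).1

instance [FiniteDimensional ℝ V] (q : ℕ) : FiniteDimensional ℝ (dirichletSpace J e V q) :=
  (finiteDimensional_neumannSpace_dirichletSpace q).2

lemma norm_le_of_norm_sq_eq_neg_inner {x y k : H} (hK : 0 ≤ K) (hx : ‖x‖ ^ 2 = -⟪y, k⟫_ℝ)
    (hk : ‖k‖ ≤ K * ‖x‖) : ‖x‖ ≤ K * ‖y‖ := by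
  have hsq : ‖x‖ * ‖x‖ ≤ (K * ‖y‖) * ‖x‖ :=
    calc ‖x‖ * ‖x‖ = -⟪y, k⟫_ℝ := by rw [← hx, sq]
      _ ≤ ‖y‖ * ‖k‖ := (neg_le_abs _).trans (abs_real_inner_le_norm y k)
      _ ≤ ‖y‖ * (K * ‖x‖) := by gcongr
      _ = (K * ‖y‖) * ‖x‖ := by ring
  rcases (norm_nonneg x).eq_or_lt with hzero | hpos
  · rw [← hzero]; positivity
  · exact le_of_mul_le_mul_right hsq hpos

namespace IntegratesByParts

lemma inner_apply_left_of_left (hJ : IntegratesByParts J e) {f : H} (hf : ⟪e, f⟫_ℝ = 0) (g : H) :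
    ⟪J f, g⟫_ℝ = -⟪f, J g⟫_ℝ := by
  have hparts := hJ f g
  rw [real_inner_comm e f, hf, zero_mul] at hparts
  linarith

lemma inner_apply_left_of_right (hJ : IntegratesByParts J e) (f : H) {g : H} (hg : ⟪e, g⟫_ℝ = 0) :
    ⟪J f, g⟫_ℝ = -⟪f, J g⟫_ℝ := by
  have hparts := hJ f g
  rw [hg, mul_zero] at hparts
  linarith

lemma norm_apply_le (hJ : IntegratesByParts J e) (hK : 0 ≤ K) (c : ℝ) {k : H}
    (hk : ⟪e, k⟫_ℝ = 0) (hkK : ‖k‖ ≤ K * ‖J k‖) : ‖J k‖ ≤ K * ‖c • e + J (J k)‖ := by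
  refine norm_le_of_norm_sq_eq_neg_inner hK ?_ hkK
  rw [inner_add_left, real_inner_smul_left, hk, mul_zero, zero_add,
    hJ.inner_apply_left_of_right _ hk, neg_neg, real_inner_self_eq_norm_sq]

lemma norm_smul_add_apply_le (hJ : IntegratesByParts J e) (hK : 0 ≤ K) {c : ℝ} {k : H}
    (hg : ⟪e, c • e + J k⟫_ℝ = 0) (hkK : ‖k‖ ≤ K * ‖c • e + J k‖) :
    ‖c • e + J k‖ ≤ K * ‖J (c • e + J k)‖ := by
  refine norm_le_of_norm_sq_eq_neg_inner hK ?_ hkK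
  rw [hJ.inner_apply_left_of_left hg, neg_neg, ← real_inner_self_eq_norm_sq]
  conv_lhs => rw [inner_add_right, real_inner_smul_right, real_inner_comm, hg, mul_zero, zero_add]

theorem inverse_inequality (hJ : IntegratesByParts J e) (hK : 0 ≤ K)
    (hV : ∀ c : ℝ, ∀ g ∈ V, ‖g‖ ≤ K * ‖c • e + J g‖) (q : ℕ) :
    (∀ c : ℝ, ∀ g ∈ dirichletSpace J e V q, ‖g‖ ≤ K * ‖c • e + J g‖) ∧
      ∀ g ∈ neumannSpace J e V q, ⟪e, g⟫_ℝ = 0 → ‖g‖ ≤ K * ‖J g‖ := by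
  induction q with
  | zero =>
    simp only [neumannSpace, dirichletSpace]
    exact ⟨hV, fun g hg _ => by simpa using hV 0 g hg⟩
  | succ q ih =>
    obtain ⟨ihD, ihN⟩ := ih
    constructor
    · intro c g hg
      obtain ⟨k, hk, hek, rfl⟩ := mem_dirichletSpace_succ.1 hg
      exact hJ.norm_apply_le hK c hek (ihN k hk hek)
    · intro g hg heg
      obtain ⟨c, k, hk, rfl⟩ := mem_neumannSpace_succ.1 hg
      exact hJ.norm_smul_add_apply_le hK heg (ihD c k hk)

-- Aubin–Nitsche: the residual `x` satisfies `‖x‖² = -⟪d, J x⟫`, and `d` only sees the part of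
-- `J x` that is not captured by `W`.
lemma norm_apply_sub_smul_le_of_mem_orthogonal (hJ : IntegratesByParts J e) (he : ‖e‖ = 1)
    (hh : 0 ≤ h) (hW : ∀ g : H, ⟪e, g⟫_ℝ = 0 → ∃ v ∈ W, ‖J g - v‖ ≤ h * ‖g‖)
    {d : H} (hd : d ∈ Wᗮ) : ‖J d - ⟪e, J d⟫_ℝ • e‖ ≤ h * ‖d‖ := by
  set x := J d - ⟪e, J d⟫_ℝ • e with hx
  have hex : ⟪e, x⟫_ℝ = 0 := by
    rw [hx, inner_sub_right, real_inner_smul_right, real_inner_self_eq_norm_sq, he]; ring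
  obtain ⟨v, hv, hvx⟩ := hW x hex
  refine norm_le_of_norm_sq_eq_neg_inner hh ?_ hvx
  rw [inner_sub_right, Submodule.inner_left_of_mem_orthogonal hv hd, sub_zero,
    ← hJ.inner_apply_left_of_right d hex, ← real_inner_self_eq_norm_sq]
  conv_lhs => rw [hx, inner_sub_left, real_inner_smul_left, ← hx, hex, mul_zero, sub_zero]

lemma norm_apply_le_of_mem_orthogonal (hJ : IntegratesByParts J e) (hh : 0 ≤ h) (heW : e ∈ W)
    (hW : ∀ g : H, ∃ v ∈ W, ‖J g - v‖ ≤ h * ‖g‖) {d : H} (hd : d ∈ Wᗮ) :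
    ‖J d‖ ≤ h * ‖d‖ := by
  obtain ⟨v, hv, hvd⟩ := hW (J d)
  refine norm_le_of_norm_sq_eq_neg_inner hh ?_ hvd
  rw [inner_sub_right, Submodule.inner_left_of_mem_orthogonal hv hd, sub_zero,
    ← hJ.inner_apply_left_of_left (Submodule.inner_right_of_mem_orthogonal heW hd),
    real_inner_self_eq_norm_sq]

end IntegratesByParts

lemma norm_sub_starProjection_le [W.HasOrthogonalProjection] (g : H) :
    ‖g - W.starProjection g‖ ≤ ‖g‖ := by
  rw [← Submodule.starProjection_orthogonal_val]
  exact Wᗮ.norm_starProjection_apply_le g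

namespace IntegratesByParts

lemma exists_norm_sub_starProjection_le (hJ : IntegratesByParts J e) (he : ‖e‖ = 1) (hh : 0 ≤ h)
    [W.HasOrthogonalProjection] (hW : ∀ g : H, ⟪e, g⟫_ℝ = 0 → ∃ v ∈ W, ‖J g - v‖ ≤ h * ‖g‖)
    (c : ℝ) (g : H) :
    ∃ c' : ℝ, ‖(c • e + J g) - (c' • e + J (W.starProjection g))‖ ≤ h * ‖g‖ := by
  set d := g - W.starProjection g with hd
  refine ⟨c + ⟪e, J d⟫_ℝ, ?_⟩
  calc ‖(c • e + J g) - ((c + ⟪e, J d⟫_ℝ) • e + J (W.starProjection g))‖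
      = ‖J d - ⟪e, J d⟫_ℝ • e‖ := by rw [add_smul, hd, map_sub]; congr 1; abel
    _ ≤ h * ‖d‖ := hJ.norm_apply_sub_smul_le_of_mem_orthogonal he hh hW
        (Submodule.sub_starProjection_mem_orthogonal g)
    _ ≤ h * ‖g‖ := by gcongr; exact norm_sub_starProjection_le g

lemma norm_apply_sub_apply_starProjection_le (hJ : IntegratesByParts J e) (hh : 0 ≤ h)
    [W.HasOrthogonalProjection] (heW : e ∈ W)
    (hW : ∀ g : H, ∃ v ∈ W, ‖J g - v‖ ≤ h * ‖g‖) (g : H) :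
    ‖J g - J (W.starProjection g)‖ ≤ h * ‖g‖ :=
  calc ‖J g - J (W.starProjection g)‖ = ‖J (g - W.starProjection g)‖ := by rw [map_sub]
    _ ≤ h * ‖g - W.starProjection g‖ := hJ.norm_apply_le_of_mem_orthogonal hh heW hW
        (Submodule.sub_starProjection_mem_orthogonal g)
    _ ≤ h * ‖g‖ := by gcongr; exact norm_sub_starProjection_le g

theorem approximation_property (hJ : IntegratesByParts J e) (he : ‖e‖ = 1) (hh : 0 ≤ h)
    [FiniteDimensional ℝ V] (heV : e ∈ V)
    (hV : ∀ g : H, ∃ v ∈ V, ‖J g - v‖ ≤ h * ‖g‖) (q : ℕ) :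
    (∀ g : H, ∃ v ∈ neumannSpace J e V q, ‖J g - v‖ ≤ h * ‖g‖) ∧
      ∀ g : H, ⟪e, g⟫_ℝ = 0 → ∃ v ∈ dirichletSpace J e V q, ‖J g - v‖ ≤ h * ‖g‖ := by
  induction q with
  | zero =>
    simp only [neumannSpace, dirichletSpace]
    exact ⟨hV, fun g _ => hV g⟩
  | succ q ih =>
    obtain ⟨ihN, ihD⟩ := ih
    constructor
    · intro g
      obtain ⟨c, hc⟩ := hJ.exists_norm_sub_starProjection_le he hh ihD 0 g
      rw [zero_smul, zero_add] at hc
      exact ⟨_, mem_neumannSpace_succ.2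
        ⟨c, _, Submodule.starProjection_apply_mem _ g, rfl⟩, hc⟩
    · intro g heg
      have heN := mem_neumannSpace_self (J := J) heV q
      refine ⟨_, mem_dirichletSpace_succ.2 ⟨_, Submodule.starProjection_apply_mem _ g, ?_, rfl⟩,
        hJ.norm_apply_sub_apply_starProjection_le hh heN ihN g⟩
      rw [← Submodule.inner_starProjection_left_eq_right,
        Submodule.starProjection_eq_self_iff.2 heN, heg]

end IntegratesByParts

lemma norm_sub_le_of_inner_sub_eq_zero {u v w : H} (huv : ⟪u - v, v - w⟫_ℝ = 0) :
    ‖v - w‖ ≤ ‖u - w‖ := by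
  have hpyth := norm_add_sq_eq_norm_sq_add_norm_sq_of_inner_eq_zero _ _ huv
  rw [sub_add_sub_cancel] at hpyth
  nlinarith [norm_nonneg (v - w), norm_nonneg (u - w), mul_self_nonneg ‖u - v‖]

theorem IntegratesByParts.norm_le_of_inner_residual_eq_zero (hJ : IntegratesByParts J e)
    (he : ‖e‖ = 1) (hh : 0 ≤ h) (hK : 0 ≤ K) [FiniteDimensional ℝ V] (heV : e ∈ V)
    (happrox : ∀ g : H, ∃ v ∈ V, ‖J g - v‖ ≤ h * ‖g‖)
    (hinv : ∀ c : ℝ, ∀ g ∈ V, ‖g‖ ≤ K * ‖c • e + J g‖) {q : ℕ} {c c' : ℝ} {g g' : H}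
    (hg' : g' ∈ dirichletSpace J e V q)
    (hres : ∀ w ∈ neumannSpace J e V (q + 1), ⟪(c • e + J g) - (c' • e + J g'), w⟫_ℝ = 0) :
    ‖g'‖ ≤ (1 + K * h) * ‖g‖ := by
  set D := dirichletSpace J e V q
  set k := D.starProjection g
  have hk : k ∈ D := D.starProjection_apply_mem g
  obtain ⟨b, hb⟩ := hJ.exists_norm_sub_starProjection_le he hh
    (hJ.approximation_property he hh heV happrox q).2 c g
  have hdist : ‖(c' • e + J g') - (b • e + J k)‖ ≤ h * ‖g‖ :=
    (norm_sub_le_of_inner_sub_eq_zero (hres _ (sub_mem (mem_neumannSpace_succ.2 ⟨c', g', hg', rfl⟩)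
      (mem_neumannSpace_succ.2 ⟨b, k, hk, rfl⟩)))).trans hb
  have hinverse : ‖g' - k‖ ≤ K * ‖(c' • e + J g') - (b • e + J k)‖ := by
    convert (hJ.inverse_inequality hK hinv q).1 (c' - b) (g' - k) (sub_mem hg' hk) using 3
    rw [map_sub, sub_smul]; abel
  calc ‖g'‖ ≤ ‖g' - k‖ + ‖k‖ := by simpa using norm_add_le (g' - k) k
    _ ≤ K * (h * ‖g‖) + ‖g‖ := by
      gcongr
      · exact hinverse.trans (by gcongr)
      · exact D.norm_starProjection_apply_le g
    _ = (1 + K * h) * ‖g‖ := by ring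

end Abstract

/-! ### Integral inequalities and absolute continuity -/

section Integrals

variable {f : ℝ → ℝ} {a b : ℝ}

lemma sq_integral_le (hab : a ≤ b) (hf : IntervalIntegrable f volume a b)
    (hf2 : IntervalIntegrable (fun x => f x ^ 2) volume a b) :
    (∫ x in a..b, f x) ^ 2 ≤ (b - a) * ∫ x in a..b, f x ^ 2 := by
  rcases hab.eq_or_lt with rfl | hlt
  · simp
  have hjensen : (⨍ x in Ioc a b, f x) ^ 2 ≤ ⨍ x in Ioc a b, f x ^ 2 :=
    (even_two.convexOn_pow (𝕜 := ℝ)).map_set_average_le (continuous_pow 2).continuousOn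
      isClosed_univ (by simp [hlt]) (by simp) (by simp) hf.1 hf2.1
  have : 0 < b - a := sub_pos.2 hlt
  simp only [setAverage_eq, Real.volume_real_Ioc_of_le hab, smul_eq_mul, mul_pow,
    ← intervalIntegral.integral_of_le hab] at hjensen
  calc (∫ x in a..b, f x) ^ 2
      = (b - a) ^ 2 * ((b - a)⁻¹ ^ 2 * (∫ x in a..b, f x) ^ 2) := by field_simp
    _ ≤ (b - a) ^ 2 * ((b - a)⁻¹ * ∫ x in a..b, f x ^ 2) := by gcongr
    _ = (b - a) * ∫ x in a..b, f x ^ 2 := by field_simp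

lemma integral_sq_integral_le (hab : a ≤ b) (hf : IntervalIntegrable f volume a b)
    (hf2 : IntervalIntegrable (fun x => f x ^ 2) volume a b) :
    ∫ x in a..b, (∫ t in a..x, f t) ^ 2 ≤ (b - a) ^ 2 * ∫ x in a..b, f x ^ 2 := by
  have hpointwise : ∀ x ∈ Icc a b, (∫ t in a..x, f t) ^ 2 ≤ (b - a) * ∫ t in a..b, f t ^ 2 := by
    intro x hx
    have hsub : uIcc a x ⊆ uIcc a b := uIcc_subset_uIcc_left (by rwa [uIcc_of_le hab])
    calc (∫ t in a..x, f t) ^ 2 ≤ (x - a) * ∫ t in a..x, f t ^ 2 :=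
          sq_integral_le hx.1 (hf.mono_set hsub) (hf2.mono_set hsub)
      _ ≤ (b - a) * ∫ t in a..b, f t ^ 2 := by
        have hmono : ∫ t in a..x, f t ^ 2 ≤ ∫ t in a..b, f t ^ 2 :=
          intervalIntegral.integral_mono_interval le_rfl hx.1 hx.2
            (Filter.Eventually.of_forall fun t => sq_nonneg (f t)) hf2
        have hnonneg : 0 ≤ ∫ t in a..x, f t ^ 2 :=
          intervalIntegral.integral_nonneg hx.1 fun t _ => sq_nonneg (f t)
        have hba : 0 ≤ b - a := sub_nonneg.2 hab
        exact mul_le_mul (by linarith [hx.2]) hmono hnonneg hba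
  have hcont : ContinuousOn (fun x => (∫ t in a..x, f t) ^ 2) (uIcc a b) :=
    (intervalIntegral.continuousOn_primitive_interval' hf left_mem_uIcc).pow 2
  calc ∫ x in a..b, (∫ t in a..x, f t) ^ 2
      ≤ ∫ _ in a..b, (b - a) * ∫ t in a..b, f t ^ 2 :=
        intervalIntegral.integral_mono_on hab hcont.intervalIntegrable intervalIntegrable_const
          hpointwise
    _ = (b - a) ^ 2 * ∫ x in a..b, f x ^ 2 := by
      rw [intervalIntegral.integral_const, smul_eq_mul]; ring

lemma integral_sq_affine (c s a b : ℝ) :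
    ∫ x in a..b, (c + s * (x - a)) ^ 2 =
      c ^ 2 * (b - a) + c * s * (b - a) ^ 2 + s ^ 2 * (b - a) ^ 3 / 3 := by
  have hderiv : ∀ x ∈ uIcc a b,
      HasDerivAt (fun x => c ^ 2 * (x - a) + c * s * (x - a) ^ 2 + s ^ 2 * (x - a) ^ 3 / 3)
        ((c + s * (x - a)) ^ 2) x := by
    intro x _
    have hx : HasDerivAt (fun x => x - a) 1 x := (hasDerivAt_id x).sub_const a
    refine (((hx.const_mul (c ^ 2)).add ((hx.pow 2).const_mul (c * s))).add
      (((hx.pow 3).const_mul (s ^ 2)).div_const 3)).congr_deriv ?_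
    norm_num
    ring
  rw [intervalIntegral.integral_eq_sub_of_hasDerivAt hderiv
    (Continuous.intervalIntegrable (by fun_prop) _ _)]
  simp

lemma sq_sub_mul_integral_sq_slope_le (c s : ℝ) (hab : a ≤ b) :
    (b - a) ^ 2 * ∫ _ in a..b, s ^ 2 ≤ 12 * ∫ x in a..b, (c + s * (x - a)) ^ 2 := by
  rw [integral_sq_affine, intervalIntegral.integral_const, smul_eq_mul]
  have hba : 0 ≤ b - a := sub_nonneg.2 hab
  nlinarith [mul_nonneg hba (sq_nonneg (c + s * (b - a) / 2))]

lemma absolutelyContinuousOnInterval_congr {g : ℝ → ℝ} (hfg : EqOn f g (uIcc a b))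
    (hf : AbsolutelyContinuousOnInterval f a b) : AbsolutelyContinuousOnInterval g a b := by
  rw [absolutelyContinuousOnInterval_iff] at hf ⊢
  intro ε hε
  obtain ⟨δ, hδ, hsum⟩ := hf ε hε
  refine ⟨δ, hδ, fun E hE hlength => (Finset.sum_congr rfl fun i hi => ?_).trans_lt
    (hsum E hE hlength)⟩
  rw [hfg (hE.1 i hi).1, hfg (hE.1 i hi).2]

lemma absolutelyContinuousOnInterval_of_differentiableAt_off_countable (hab : a ≤ b) {s : Set ℝ}
    (hs : s.Countable) (hcont : ContinuousOn f (Icc a b))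
    (hdiff : ∀ x ∈ Ioo a b \ s, DifferentiableAt ℝ f x)
    (hint : IntervalIntegrable (deriv f) volume a b) : AbsolutelyContinuousOnInterval f a b := by
  have hftc : EqOn (fun x => f a + ∫ t in a..x, deriv f t) f (uIcc a b) := by
    intro x hx
    rw [uIcc_of_le hab] at hx
    have hsub : uIcc a x ⊆ uIcc a b := uIcc_subset_uIcc_left (by rwa [uIcc_of_le hab])
    simp only [integral_eq_of_hasDerivAt_off_countable_of_le f (deriv f) hx.1 hs
      (hcont.mono (Icc_subset_Icc_right hx.2))
      (fun y hy => (hdiff y ⟨⟨hy.1.1, hy.1.2.trans_le hx.2⟩, hy.2⟩).hasDerivAt)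
      (hint.mono_set hsub), add_sub_cancel]
  have hconst : AbsolutelyContinuousOnInterval (fun _ => f a) a b :=
    (LipschitzWith.const _).lipschitzOnWith.absolutelyContinuousOnInterval
  have hprim := hint.absolutelyContinuousOnInterval_intervalIntegral (c := a) left_mem_uIcc
  exact absolutelyContinuousOnInterval_congr hftc (hconst.add hprim)

end Integrals

/-! ### Integration as an operator on `L²(0, 1)` -/

/-- Lebesgue measure on the interval `(0, 1)`. -/
abbrev unitMeasure : Measure ℝ := volume.restrict (Ioo 0 1)

/-- The Hilbert space `L²(0, 1)`. -/
abbrev L2Unit : Type := Lp ℝ 2 unitMeasure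

/-- The primitive of `f` that vanishes at `0`. -/
def primitive (f : ℝ → ℝ) (x : ℝ) : ℝ := ∫ t in 0..x, f t

section Primitive

variable {f g : ℝ → ℝ} {a b : ℝ}

lemma integral_unitMeasure (f : ℝ → ℝ) : ∫ x, f x ∂unitMeasure = ∫ x in 0..1, f x := by
  rw [intervalIntegral.integral_of_le zero_le_one, ← restrict_Ioo_eq_restrict_Ioc]

lemma intervalIntegrable_of_memLp (hf : MemLp f 2 unitMeasure) :
    IntervalIntegrable f volume 0 1 :=
  (intervalIntegrable_iff_integrableOn_Ioo_of_le zero_le_one).2 (hf.integrable one_le_two)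

lemma intervalIntegrable_sq_of_memLp (hf : MemLp f 2 unitMeasure) :
    IntervalIntegrable (fun x => f x ^ 2) volume 0 1 :=
  (intervalIntegrable_iff_integrableOn_Ioo_of_le zero_le_one).2 hf.integrable_sq

lemma uIcc_subset_uIcc_zero_one (ha : a ∈ Icc (0 : ℝ) 1) (hb : b ∈ Icc (0 : ℝ) 1) :
    uIcc a b ⊆ uIcc 0 1 := by
  rw [uIcc_of_le zero_le_one]
  exact ordConnected_Icc.uIcc_subset ha hb

lemma primitive_sub_primitive (hf : IntervalIntegrable f volume 0 1) (ha : a ∈ Icc (0 : ℝ) 1)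
    (hb : b ∈ Icc (0 : ℝ) 1) : primitive f b - primitive f a = ∫ t in a..b, f t :=
  intervalIntegral.integral_interval_sub_left
    (hf.mono_set (uIcc_subset_uIcc_zero_one (by simp) hb))
    (hf.mono_set (uIcc_subset_uIcc_zero_one (by simp) ha))

lemma primitive_congr_ae (hfg : f =ᵐ[unitMeasure] g) {x : ℝ} (hx : x ∈ Icc (0 : ℝ) 1) :
    primitive f x = primitive g x := by
  simp only [primitive, intervalIntegral.integral_of_le hx.1, ← restrict_Ioo_eq_restrict_Ioc]
  exact integral_congr_ae (ae_restrict_of_ae_restrict_of_subset (Ioo_subset_Ioo_right hx.2) hfg)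

lemma absolutelyContinuousOnInterval_primitive (hf : IntervalIntegrable f volume 0 1) :
    AbsolutelyContinuousOnInterval (primitive f) 0 1 :=
  hf.absolutelyContinuousOnInterval_intervalIntegral (by simp)

lemma deriv_primitive_ae_eq (hf : IntervalIntegrable f volume 0 1) :
    deriv (primitive f) =ᵐ[unitMeasure] f := by
  filter_upwards [ae_restrict_of_ae hf.ae_hasDerivAt_integral,
    ae_restrict_mem measurableSet_Ioo] with x hderiv hx
  exact (hderiv (by simpa using Ioo_subset_Icc_self hx) 0 (by simp)).deriv

lemma memLp_of_continuousOn_Icc {p : ENNReal} (hf : ContinuousOn f (Icc 0 1)) :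
    MemLp f p unitMeasure := by
  obtain ⟨C, hC⟩ := isCompact_Icc.exists_bound_of_continuousOn hf
  refine MemLp.of_bound ((hf.mono Ioo_subset_Icc_self).aestronglyMeasurable measurableSet_Ioo) C ?_
  filter_upwards [ae_restrict_mem measurableSet_Ioo] with x hx
  exact hC x (Ioo_subset_Icc_self hx)

lemma memLp_primitive (hf : MemLp f 2 unitMeasure) : MemLp (primitive f) 2 unitMeasure :=
  memLp_of_continuousOn_Icc <| by
    simpa using
      (absolutelyContinuousOnInterval_primitive (intervalIntegrable_of_memLp hf)).continuousOn

lemma primitive_deriv (hf : AbsolutelyContinuousOnInterval f 0 1) (ha : a ∈ Icc (0 : ℝ) 1) :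
    primitive (deriv f) a = f a - f 0 :=
  (hf.mono (uIcc_subset_uIcc_zero_one (by simp) ha)).integral_deriv_eq_sub

end Primitive

/-- Integration from `0`, as an operator on `L²(0, 1)`. -/
def primitiveOp : L2Unit →ₗ[ℝ] L2Unit where
  toFun f := (memLp_primitive (Lp.memLp f)).toLp
  map_add' f g := by
    rw [← MemLp.toLp_add, MemLp.toLp_eq_toLp_iff]
    filter_upwards [ae_restrict_mem measurableSet_Ioo] with x hx
    have hsub := uIcc_subset_uIcc_zero_one (left_mem_Icc.2 zero_le_one) (Ioo_subset_Icc_self hx)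
    rw [primitive_congr_ae (Lp.coeFn_add f g) (Ioo_subset_Icc_self hx)]
    exact intervalIntegral.integral_add
      ((intervalIntegrable_of_memLp (Lp.memLp f)).mono_set hsub)
      ((intervalIntegrable_of_memLp (Lp.memLp g)).mono_set hsub)
  map_smul' c f := by
    rw [RingHom.id_apply, ← MemLp.toLp_const_smul, MemLp.toLp_eq_toLp_iff]
    filter_upwards [ae_restrict_mem measurableSet_Ioo] with x hx
    rw [primitive_congr_ae (Lp.coeFn_smul c f) (Ioo_subset_Icc_self hx)]
    exact intervalIntegral.integral_smul c _

/-- The constant function `1` as an element of `L²(0, 1)`. -/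
def oneL2 : L2Unit := (memLp_const 1).toLp

lemma coeFn_primitiveOp {f : L2Unit} {F : ℝ → ℝ} (hf : f =ᵐ[unitMeasure] F) :
    primitiveOp f =ᵐ[unitMeasure] primitive F := by
  filter_upwards [(memLp_primitive (Lp.memLp f)).coeFn_toLp,
    ae_restrict_mem measurableSet_Ioo] with x hprim hx
  rw [← primitive_congr_ae hf (Ioo_subset_Icc_self hx)]
  exact hprim

lemma coeFn_oneL2 : oneL2 =ᵐ[unitMeasure] fun _ => (1 : ℝ) := (memLp_const 1).coeFn_toLp

lemma coeFn_smul_oneL2_add_primitiveOp (c : ℝ) {f : L2Unit} {F : ℝ → ℝ}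
    (hf : f =ᵐ[unitMeasure] F) :
    (c • oneL2 + primitiveOp f : L2Unit) =ᵐ[unitMeasure] fun x => c + primitive F x := by
  filter_upwards [Lp.coeFn_add (c • oneL2) (primitiveOp f), Lp.coeFn_smul c oneL2, coeFn_oneL2,
    coeFn_primitiveOp hf] with x hadd hsmul hone hprim
  rw [hadd, Pi.add_apply, hsmul, Pi.smul_apply, hone, hprim, smul_eq_mul, mul_one]

lemma coeFn_smul_oneL2_add_primitiveOp_deriv {u : ℝ → ℝ}
    (hu : AbsolutelyContinuousOnInterval u 0 1) (hu' : MemLp (deriv u) 2 unitMeasure) :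
    (u 0 • oneL2 + primitiveOp hu'.toLp : L2Unit) =ᵐ[unitMeasure] u := by
  filter_upwards [coeFn_smul_oneL2_add_primitiveOp (u 0) hu'.coeFn_toLp,
    ae_restrict_mem measurableSet_Ioo] with x hx hmem
  rw [hx, primitive_deriv hu (Ioo_subset_Icc_self hmem), add_sub_cancel]

lemma inner_eq_integral_of_ae_eq {f g : L2Unit} {F G : ℝ → ℝ} (hf : f =ᵐ[unitMeasure] F)
    (hg : g =ᵐ[unitMeasure] G) : ⟪f, g⟫_ℝ = ∫ x, F x * G x ∂unitMeasure := by
  rw [L2.inner_def]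
  refine integral_congr_ae ?_
  filter_upwards [hf, hg] with x hfx hgx
  simp [hfx, hgx, mul_comm]

lemma norm_sq_eq_integral_of_ae_eq {f : L2Unit} {F : ℝ → ℝ} (hf : f =ᵐ[unitMeasure] F) :
    ‖f‖ ^ 2 = ∫ x, F x ^ 2 ∂unitMeasure := by
  rw [← real_inner_self_eq_norm_sq, inner_eq_integral_of_ae_eq hf hf]
  simp only [sq]

lemma inner_oneL2 {f : L2Unit} {F : ℝ → ℝ} (hf : f =ᵐ[unitMeasure] F) :
    ⟪oneL2, f⟫_ℝ = primitive F 1 := by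
  simp only [inner_eq_integral_of_ae_eq coeFn_oneL2 hf, one_mul, integral_unitMeasure, primitive]

lemma norm_oneL2 : ‖oneL2‖ = 1 := by
  have hsq : ‖oneL2‖ ^ 2 = 1 := by simp [norm_sq_eq_integral_of_ae_eq coeFn_oneL2]
  exact (pow_eq_one_iff_of_nonneg (norm_nonneg _) two_ne_zero).1 hsq

lemma integratesByParts_primitiveOp : IntegratesByParts primitiveOp oneL2 := by
  intro f g
  have hf := intervalIntegrable_of_memLp (Lp.memLp f)
  have hg := intervalIntegrable_of_memLp (Lp.memLp g)
  rw [real_inner_comm oneL2 f, inner_oneL2 ae_eq_rfl, inner_oneL2 ae_eq_rfl,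
    inner_eq_integral_of_ae_eq (coeFn_primitiveOp ae_eq_rfl) (deriv_primitive_ae_eq hg).symm,
    inner_eq_integral_of_ae_eq (deriv_primitive_ae_eq hf).symm (coeFn_primitiveOp ae_eq_rfl),
    integral_unitMeasure, integral_unitMeasure,
    (absolutelyContinuousOnInterval_primitive hf).integral_mul_deriv_eq_deriv_mul
      (absolutelyContinuousOnInterval_primitive hg)]
  simp [primitive]

/-! ### The uniform partition -/

/-- The `j`-th knot `j / m` of the uniform partition of `[0, 1]` into `m` cells. -/
def knot (m j : ℕ) : ℝ := j / m

/-- The `j`-th open cell of the uniform partition. As for `pieceSet`, the first cell extends to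
`-∞` and the last one to `+∞`. -/
def openCell (m j : ℕ) : Set ℝ :=
  {x | (j = 0 ∨ knot m j < x) ∧ (j + 1 = m ∨ x < knot m (j + 1))}

/-- The index of a cell containing `x`, where a knot is attributed to the cell on its right. Since
`⌊·⌋₊` vanishes on negative numbers, points left of `0` get index `0`; the minimum does the same
for the last cell. -/
def cellIndex (m : ℕ) [NeZero m] (x : ℝ) : Fin m :=
  ⟨min ⌊m * x⌋₊ (m - 1), (min_le_right _ _).trans_lt (Nat.sub_one_lt (NeZero.ne m))⟩

section Partition

variable {m : ℕ}

lemma knot_mem_Icc {j : ℕ} (hj : j ≤ m) : knot m j ∈ Icc (0 : ℝ) 1 :=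
  ⟨by unfold knot; positivity, div_le_one_of_le₀ (by exact_mod_cast hj) (by positivity)⟩

lemma knot_succ_sub_knot (j : ℕ) : knot m (j + 1) - knot m j = 1 / m := by
  unfold knot
  push_cast
  ring

lemma Ioo_knot_subset_openCell (j : ℕ) : Ioo (knot m j) (knot m (j + 1)) ⊆ openCell m j :=
  fun _ hx => ⟨Or.inr hx.1, Or.inr hx.2⟩

lemma isOpen_openCell (j : ℕ) : IsOpen (openCell m j) :=
  (isOpen_const.union isOpen_Ioi).inter (isOpen_const.union isOpen_Iio)

lemma ae_notMem_range_knot : ∀ᵐ x ∂unitMeasure, x ∉ range (knot m) :=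
  ae_restrict_of_ae ((countable_range (knot m)).ae_notMem volume)

lemma Icc_knot_subset_Icc (j : Fin m) : Icc (knot m j) (knot m (j + 1)) ⊆ Icc 0 1 :=
  Icc_subset_Icc (knot_mem_Icc j.2.le).1 (knot_mem_Icc j.2).2

variable [NeZero m]

lemma cast_pos_of_neZero : (0 : ℝ) < m := Nat.cast_pos.2 (NeZero.pos m)

lemma knot_lt_knot_succ (j : ℕ) : knot m j < knot m (j + 1) :=
  sub_pos.1 (by rw [knot_succ_sub_knot]; exact one_div_pos.2 cast_pos_of_neZero)

lemma cellIndex_eq_of_mem_openCell {j : Fin m} {x : ℝ} (hx : x ∈ openCell m j) :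
    cellIndex m x = j := by
  have hm : (0 : ℝ) < m := cast_pos_of_neZero
  have hlower : j ≤ ⌊m * x⌋₊ := by
    rcases hx.1 with hj | hlt
    · omega
    · rw [knot, div_lt_iff₀' hm] at hlt
      exact Nat.le_floor hlt.le
  have hupper : (j : ℕ) + 1 = m ∨ ⌊m * x⌋₊ < j + 1 := by
    refine hx.2.imp_right fun hlt => ?_
    rw [knot, lt_div_iff₀' hm] at hlt
    exact (Nat.floor_lt' (Nat.succ_ne_zero _)).2 hlt
  ext
  simp only [cellIndex]
  omega

lemma mem_pieceSet {j : ℕ} {x : ℝ} :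
    x ∈ pieceSet m j ↔ (j = 0 ∨ knot m j ≤ x) ∧ (j + 1 = m ∨ x ≤ knot m (j + 1)) := by
  have hm := NeZero.pos m
  have hlast : j = m - 1 ↔ j + 1 = m := by omega
  by_cases hj0 : j = 0 <;> by_cases hjm : j + 1 = m
  · subst hj0 hjm
    simpa [pieceSet] using (le_total x 0).imp_left fun hx => hx.trans zero_le_one
  · subst hj0
    simp [pieceSet, hlast, hjm, knot]
  · subst hjm
    simpa [pieceSet, hj0, knot] using fun hx _ => hx
  · simp [pieceSet, hlast, hj0, hjm, knot]

lemma mem_pieceSet_cellIndex (x : ℝ) : x ∈ pieceSet m (cellIndex m x) := by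
  have hm : (0 : ℝ) < m := cast_pos_of_neZero
  refine mem_pieceSet.2 ⟨or_iff_not_imp_left.2 fun hfirst => ?_,
    or_iff_not_imp_left.2 fun hlast => ?_⟩
  · rw [knot, div_le_iff₀' hm]
    exact (Nat.le_floor_iff' hfirst).1 (min_le_left _ _)
  · have hfloor : (cellIndex m x : ℕ) = ⌊m * x⌋₊ := by
      have hpos := NeZero.pos m
      dsimp only [cellIndex] at hlast ⊢
      omega
    rw [knot, le_div_iff₀' hm, hfloor, Nat.cast_succ]
    exact (Nat.lt_floor_add_one _).le

lemma openCell_subset_pieceSet (j : ℕ) : openCell m j ⊆ pieceSet m j := fun _ hx =>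
  mem_pieceSet.2 ⟨hx.1.imp_right le_of_lt, hx.2.imp_right le_of_lt⟩

lemma knot_mem_pieceSet (j : ℕ) : knot m j ∈ pieceSet m j :=
  mem_pieceSet.2 ⟨Or.inr le_rfl, Or.inr (knot_lt_knot_succ j).le⟩

lemma isClosed_pieceSet (j : ℕ) : IsClosed (pieceSet m j) := by
  rw [show pieceSet m j = _ from Set.ext fun _ => mem_pieceSet]
  exact (isClosed_const.union isClosed_Ici).inter (isClosed_const.union isClosed_Iic)

lemma uIoo_subset_openCell {j : ℕ} {x y : ℝ} (hx : x ∈ pieceSet m j) (hy : y ∈ pieceSet m j) :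
    uIoo x y ⊆ openCell m j := by
  rw [mem_pieceSet] at hx hy
  refine fun z hz => ⟨or_iff_not_imp_left.2 fun hfirst => ?_,
    or_iff_not_imp_left.2 fun hlast => ?_⟩
  · exact (le_min (hx.1.resolve_left hfirst) (hy.1.resolve_left hfirst)).trans_lt hz.1
  · exact hz.2.trans_le (max_le (hx.2.resolve_left hlast) (hy.2.resolve_left hlast))

lemma uniqueDiffOn_pieceSet (j : ℕ) : UniqueDiffOn ℝ (pieceSet m j) := by
  apply uniqueDiffOn_convex
  · refine convex_iff_ordConnected.2 ⟨fun x hx y hy z hz => ?_⟩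
    rw [mem_pieceSet] at hx hy ⊢
    exact ⟨hx.1.imp_right fun h => h.trans hz.1, hy.2.imp_right fun h => hz.2.trans h⟩
  · exact (nonempty_Ioo.2 (knot_lt_knot_succ j)).mono <| (Ioo_knot_subset_openCell j).trans <|
      interior_maximal (openCell_subset_pieceSet j) (isOpen_openCell j)

lemma mem_openCell_cellIndex {x : ℝ} (hx : x ∉ range (knot m)) :
    x ∈ openCell m (cellIndex m x) := by
  obtain ⟨hleft, hright⟩ := mem_pieceSet.1 (mem_pieceSet_cellIndex (m := m) x)
  exact ⟨hleft.imp_right fun h => h.lt_of_ne fun heq => hx ⟨_, heq⟩,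
    hright.imp_right fun h => h.lt_of_ne fun heq => hx ⟨_, heq.symm⟩⟩

end Partition

/-! ### Piecewise constant functions -/

section PiecewiseConst

variable {m : ℕ} [NeZero m]

lemma measurable_cellIndex : Measurable (cellIndex m) := by
  have hm := NeZero.pos m
  have hfloor : Measurable fun x : ℝ => ⌊m * x⌋₊ := by fun_prop
  exact (measurable_of_countable fun k : ℕ => (⟨min k (m - 1), by omega⟩ : Fin m)).comp hfloor

lemma measurable_comp_cellIndex (a : Fin m → ℝ) : Measurable fun x => a (cellIndex m x) :=
  (measurable_of_countable a).comp measurable_cellIndex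

lemma norm_comp_cellIndex_le (a : Fin m → ℝ) (x : ℝ) : ‖a (cellIndex m x)‖ ≤ ‖a‖ :=
  norm_le_pi_norm a _

lemma memLp_comp_cellIndex (a : Fin m → ℝ) : MemLp (fun x => a (cellIndex m x)) 2 unitMeasure :=
  MemLp.of_bound (measurable_comp_cellIndex a).aestronglyMeasurable ‖a‖
    (Filter.Eventually.of_forall (norm_comp_cellIndex_le a))

lemma intervalIntegrable_comp_cellIndex (a : Fin m → ℝ) (s t : ℝ) :
    IntervalIntegrable (fun x => a (cellIndex m x)) volume s t :=
  (intervalIntegrable_const (c := ‖a‖)).mono_fun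
    (measurable_comp_cellIndex a).aestronglyMeasurable
    (Filter.Eventually.of_forall fun x => (norm_comp_cellIndex_le a x).trans (le_abs_self _))

/-- The step function with value `a j` on the `j`-th cell, as an element of `L²(0, 1)`. -/
def stepL2 (m : ℕ) [NeZero m] : (Fin m → ℝ) →ₗ[ℝ] L2Unit where
  toFun a := (memLp_comp_cellIndex a).toLp
  map_add' _ _ := rfl
  map_smul' _ _ := rfl

/-- The piecewise constant functions on the uniform partition: the splines of degree `0`. -/
abbrev piecewiseConst (m : ℕ) [NeZero m] : Submodule ℝ L2Unit := LinearMap.range (stepL2 m)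

lemma coeFn_stepL2 (a : Fin m → ℝ) : stepL2 m a =ᵐ[unitMeasure] fun x => a (cellIndex m x) :=
  (memLp_comp_cellIndex a).coeFn_toLp

lemma oneL2_mem_piecewiseConst : oneL2 ∈ piecewiseConst m := ⟨fun _ => 1, rfl⟩

lemma integral_unitMeasure_eq_sum_cells {f : ℝ → ℝ} (hf : IntervalIntegrable f volume 0 1) :
    ∫ x, f x ∂unitMeasure = ∑ j : Fin m, ∫ x in knot m j..knot m (j + 1), f x := by
  have hm : (m : ℝ) ≠ 0 := cast_pos_of_neZero.ne'
  rw [Fin.sum_univ_eq_sum_range fun j => ∫ x in knot m j..knot m (j + 1), f x,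
    intervalIntegral.sum_integral_adjacent_intervals fun j hj => hf.mono_set
      (uIcc_subset_uIcc_zero_one (knot_mem_Icc hj.le) (knot_mem_Icc hj)), integral_unitMeasure]
  simp [knot, hm]

lemma norm_le_of_forall_cell {f g : L2Unit} {F G : ℝ → ℝ} {C : ℝ} (hC : 0 ≤ C)
    (hf : f =ᵐ[unitMeasure] F) (hg : g =ᵐ[unitMeasure] G)
    (hcell : ∀ j : Fin m, ∫ x in knot m j..knot m (j + 1), F x ^ 2 ≤
      C ^ 2 * ∫ x in knot m j..knot m (j + 1), G x ^ 2) : ‖f‖ ≤ C * ‖g‖ := by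
  have hF := (memLp_congr_ae hf).1 (Lp.memLp f)
  have hG := (memLp_congr_ae hg).1 (Lp.memLp g)
  refine le_of_sq_le_sq ?_ (by positivity)
  rw [mul_pow, norm_sq_eq_integral_of_ae_eq hf, norm_sq_eq_integral_of_ae_eq hg,
    integral_unitMeasure_eq_sum_cells (m := m) (intervalIntegrable_sq_of_memLp hF),
    integral_unitMeasure_eq_sum_cells (m := m) (intervalIntegrable_sq_of_memLp hG),
    Finset.mul_sum]
  exact Finset.sum_le_sum fun j _ => hcell j

lemma exists_piecewiseConst_norm_primitiveOp_sub_le (g : L2Unit) :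
    ∃ v ∈ piecewiseConst m, ‖primitiveOp g - v‖ ≤ 1 / m * ‖g‖ := by
  set a : Fin m → ℝ := fun j => primitive g (knot m j)
  have hcoe : (primitiveOp g - stepL2 m a : L2Unit) =ᵐ[unitMeasure]
      fun x => primitive g x - a (cellIndex m x) :=
    (Lp.coeFn_sub _ _).trans ((coeFn_primitiveOp ae_eq_rfl).sub (coeFn_stepL2 a))
  refine ⟨stepL2 m a, ⟨a, rfl⟩, ?_⟩
  refine norm_le_of_forall_cell (m := m) (by positivity) hcoe ae_eq_rfl fun j => ?_
  have hle := (knot_lt_knot_succ (m := m) j).le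
  have hint := intervalIntegrable_of_memLp (Lp.memLp g)
  have hsub := uIcc_subset_uIcc_zero_one (knot_mem_Icc j.2.le) (knot_mem_Icc j.2)
  have hdiff : ∀ x ∈ Ioo (knot m j) (knot m (j + 1)),
      primitive g x - a (cellIndex m x) = ∫ t in knot m j..x, g t := fun x hx => by
    rw [cellIndex_eq_of_mem_openCell (Ioo_knot_subset_openCell _ hx)]
    exact primitive_sub_primitive hint (knot_mem_Icc j.2.le)
      (Icc_knot_subset_Icc j (Ioo_subset_Icc_self hx))
  rw [intervalIntegral.integral_congr_Ioo_of_le hle fun x hx => congrArg (· ^ 2) (hdiff x hx),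
    ← knot_succ_sub_knot j]
  exact integral_sq_integral_le hle (hint.mono_set hsub)
    ((intervalIntegrable_sq_of_memLp (Lp.memLp g)).mono_set hsub)

lemma primitive_comp_cellIndex (a : Fin m → ℝ) (j : Fin m) {x : ℝ}
    (hx : x ∈ Icc (knot m j) (knot m (j + 1))) :
    primitive (fun t => a (cellIndex m t)) x =
      primitive (fun t => a (cellIndex m t)) (knot m j) + a j * (x - knot m j) := by
  have hconst : EqOn (fun t => a (cellIndex m t)) (fun _ => a j) (Ioo (knot m j) x) :=
    fun t ht => congrArg a <| cellIndex_eq_of_mem_openCell <|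
      Ioo_knot_subset_openCell _ ⟨ht.1, ht.2.trans_le hx.2⟩
  rw [← sub_eq_iff_eq_add', primitive_sub_primitive (intervalIntegrable_comp_cellIndex a 0 1)
    (knot_mem_Icc j.2.le) (Icc_knot_subset_Icc j hx),
    intervalIntegral.integral_congr_Ioo_of_le hx.1 hconst, intervalIntegral.integral_const,
    smul_eq_mul, mul_comm]

lemma norm_le_of_mem_piecewiseConst (c : ℝ) {g : L2Unit} (hg : g ∈ piecewiseConst m) :
    ‖g‖ ≤ 4 * m * ‖c • oneL2 + primitiveOp g‖ := by
  obtain ⟨a, rfl⟩ := hg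
  refine norm_le_of_forall_cell (m := m) (by positivity) (coeFn_stepL2 a)
    (coeFn_smul_oneL2_add_primitiveOp c (coeFn_stepL2 a)) fun j => ?_
  set G : ℝ → ℝ := fun x => a (cellIndex m x)
  have hm : (0 : ℝ) < m := cast_pos_of_neZero
  have hle := (knot_lt_knot_succ (m := m) j).le
  have hconst : EqOn (fun x => G x ^ 2) (fun _ => a j ^ 2) (Ioo (knot m j) (knot m (j + 1))) :=
    fun x hx => congrArg (a · ^ 2) (cellIndex_eq_of_mem_openCell (Ioo_knot_subset_openCell _ hx))
  have haffine : EqOn (fun x => (c + primitive G x) ^ 2)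
      (fun x => ((c + primitive G (knot m j)) + a j * (x - knot m j)) ^ 2)
      (Ioo (knot m j) (knot m (j + 1))) := fun x hx => by
    simp only [G, primitive_comp_cellIndex a j (Ioo_subset_Icc_self hx), add_assoc]
  rw [intervalIntegral.integral_congr_Ioo_of_le hle hconst,
    intervalIntegral.integral_congr_Ioo_of_le hle haffine]
  set I := ∫ x in knot m j..knot m (j + 1),
    ((c + primitive G (knot m j)) + a j * (x - knot m j)) ^ 2
  have hI : 0 ≤ I := intervalIntegral.integral_nonneg hle fun x _ => sq_nonneg _
  have hslope := sq_sub_mul_integral_sq_slope_le (c + primitive G (knot m j)) (a j) hle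
  rw [knot_succ_sub_knot, div_pow, one_pow, one_div_mul_eq_div, div_le_iff₀ (by positivity)]
    at hslope
  calc ∫ _ in knot m j..knot m (j + 1), a j ^ 2 ≤ 12 * I * m ^ 2 := hslope
    _ ≤ 16 * I * m ^ 2 := by gcongr; norm_num
    _ = (4 * m) ^ 2 * I := by ring

end PiecewiseConst

/-! ### Splines -/

/-- `u` is a spline of degree `p` on the uniform partition whose even derivatives of order `< p`
vanish at both endpoints: the counterpart of `IsSpline0` under differentiation. -/
def IsSplineDirichlet (m p : ℕ) (u : ℝ → ℝ) : Prop :=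
  IsSpline m p u ∧
  ∀ l : ℕ, 2 * l < p → iteratedDeriv (2 * l) u 0 = 0 ∧ iteratedDeriv (2 * l) u 1 = 0

section Spline

variable {m p : ℕ} {u : ℝ → ℝ}

lemma IsSplineDirichlet.apply_zero_and_apply_one (hu : IsSplineDirichlet m (p + 1) u) :
    u 0 = 0 ∧ u 1 = 0 := by
  simpa using hu.2 0 (by omega)

variable [NeZero m]

lemma hasDerivAt_of_mem_openCell {j : ℕ} {q : Polynomial ℝ}
    (hq : ∀ x ∈ pieceSet m j, u x = q.eval x) {x : ℝ} (hx : x ∈ openCell m j) :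
    HasDerivAt u (q.derivative.eval x) x := by
  refine (q.hasDerivAt x).congr_of_eventuallyEq ?_
  filter_upwards [(isOpen_openCell j).mem_nhds hx] with y hy
  exact hq y (openCell_subset_pieceSet j hy)

namespace IsSpline

lemma continuous (hu : IsSpline m p u) : Continuous u := by
  refine (locallyFinite_of_finite fun j : Fin m => pieceSet m j).continuous
    (eq_univ_of_forall fun x => mem_iUnion.2 ⟨cellIndex m x, mem_pieceSet_cellIndex x⟩)
    (fun j => isClosed_pieceSet j) fun j => ?_
  obtain ⟨q, -, hq⟩ := hu.2 j j.2
  exact q.continuous.continuousOn.congr hq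

lemma exists_deriv_eq_off_knots (hu : IsSpline m p u) :
    ∃ q : Fin m → Polynomial ℝ, (∀ j, (q j).natDegree ≤ p - 1) ∧
      ∀ x ∉ range (knot m), HasDerivAt u ((q (cellIndex m x)).eval x) x := by
  choose q hdeg hq using fun j : Fin m => hu.2 j j.2
  exact ⟨fun j => (q j).derivative,
    fun j => (q j).natDegree_derivative_le.trans (Nat.sub_le_sub_right (hdeg j) 1),
    fun x hx => hasDerivAt_of_mem_openCell (hq _) (mem_openCell_cellIndex hx)⟩

lemma memLp_deriv (hu : IsSpline m p u) : MemLp (deriv u) 2 unitMeasure := by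
  obtain ⟨q, -, hq⟩ := hu.exists_deriv_eq_off_knots
  choose C hC using fun j => isCompact_Icc.exists_bound_of_continuousOn
    (s := Icc (0 : ℝ) 1) (q j).continuous.continuousOn
  refine MemLp.of_bound (measurable_deriv u).aestronglyMeasurable ‖C‖ ?_
  filter_upwards [ae_notMem_range_knot, ae_restrict_mem measurableSet_Ioo] with x hx hmem
  rw [(hq x hx).deriv]
  exact (hC _ x (Ioo_subset_Icc_self hmem)).trans
    ((le_abs_self _).trans (norm_le_pi_norm C (cellIndex m x)))

lemma absolutelyContinuousOnInterval (hu : IsSpline m p u) :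
    AbsolutelyContinuousOnInterval u 0 1 := by
  obtain ⟨q, -, hq⟩ := hu.exists_deriv_eq_off_knots
  exact absolutelyContinuousOnInterval_of_differentiableAt_off_countable zero_le_one
    (countable_range (knot m)) hu.continuous.continuousOn
    (fun x hx => (hq x hx.2).differentiableAt) (intervalIntegrable_of_memLp hu.memLp_deriv)

lemma differentiable (hu : IsSpline m (p + 2) u) : Differentiable ℝ u := by
  intro x
  have hm := NeZero.pos m
  have hm' : (0 : ℝ) < m := cast_pos_of_neZero
  rcases le_or_gt x 0 with hleft | hpos
  · obtain ⟨q, -, hq⟩ := hu.2 0 hm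
    have hknot : 0 < knot m (0 + 1) := by unfold knot; positivity
    exact (hasDerivAt_of_mem_openCell hq
      ⟨Or.inl rfl, Or.inr (hleft.trans_lt hknot)⟩).differentiableAt
  rcases le_or_gt 1 x with hright | hlt
  · obtain ⟨q, -, hq⟩ := hu.2 (m - 1) (by omega)
    have hknot : knot m (m - 1) < 1 := (div_lt_one hm').2 (by exact_mod_cast Nat.sub_one_lt hm.ne')
    exact (hasDerivAt_of_mem_openCell hq
      ⟨Or.inr (hknot.trans_le hright), Or.inl (by omega)⟩).differentiableAt
  · have hdiff := hu.1.differentiableOn (by exact_mod_cast (by omega : p + 2 - 1 ≠ 0))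
    exact (hdiff x ⟨hpos, hlt⟩).differentiableAt (isOpen_Ioo.mem_nhds ⟨hpos, hlt⟩)

protected lemma deriv (hu : IsSpline m (p + 2) u) : IsSpline m (p + 1) (deriv u) := by
  refine ⟨?_, fun j hj => ?_⟩
  · exact ((contDiffOn_succ_iff_deriv_of_isOpen (n := p) isOpen_Ioo).1 hu.1).2.2
  · obtain ⟨q, hdeg, hq⟩ := hu.2 j hj
    refine ⟨q.derivative, q.natDegree_derivative_le.trans (by omega), fun x hx => ?_⟩
    have hderiv : HasDerivWithinAt u (q.derivative.eval x) (pieceSet m j) x :=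
      (q.hasDerivWithinAt x _).congr hq (hq x hx)
    exact (uniqueDiffOn_pieceSet j x hx).eq_deriv _
      (hu.differentiable x).hasDerivAt.hasDerivWithinAt hderiv

lemma toLp_deriv_mem_piecewiseConst (hu : IsSpline m 1 u) :
    hu.memLp_deriv.toLp ∈ piecewiseConst m := by
  obtain ⟨q, hdeg, hq⟩ := hu.exists_deriv_eq_off_knots
  refine ⟨fun j => (q j).coeff 0, Lp.ext ?_⟩
  filter_upwards [coeFn_stepL2 (fun j => (q j).coeff 0), hu.memLp_deriv.coeFn_toLp,
    ae_notMem_range_knot] with x hstep hderiv hx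
  rw [hstep, hderiv, (hq x hx).deriv, Polynomial.eq_C_of_natDegree_le_zero (hdeg _)]
  simp

end IsSpline

protected lemma IsSpline0.deriv (hu : IsSpline0 m (p + 2) u) :
    IsSplineDirichlet m (p + 1) (deriv u) := by
  refine ⟨hu.1.deriv, fun l hl => ?_⟩
  rw [← iteratedDeriv_succ']
  exact hu.2 l (by omega)

namespace IsSplineDirichlet

protected lemma deriv (hu : IsSplineDirichlet m (p + 2) u) : IsSpline0 m (p + 1) (deriv u) := by
  refine ⟨hu.1.deriv, fun l hl => ?_⟩
  rw [← iteratedDeriv_succ']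
  exact hu.2 (l + 1) (by omega)

lemma inner_oneL2_toLp_deriv (hu : IsSplineDirichlet m (p + 1) u) :
    ⟪oneL2, hu.1.memLp_deriv.toLp⟫_ℝ = 0 := by
  obtain ⟨hzero, hone⟩ := hu.apply_zero_and_apply_one
  rw [inner_oneL2 hu.1.memLp_deriv.coeFn_toLp,
    primitive_deriv hu.1.absolutelyContinuousOnInterval (by simp), hzero, hone, sub_zero]

lemma primitiveOp_toLp_deriv (hu : IsSplineDirichlet m (p + 1) u) (hu2 : MemLp u 2 unitMeasure) :
    primitiveOp hu.1.memLp_deriv.toLp = hu2.toLp := by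
  have hrepr := coeFn_smul_oneL2_add_primitiveOp_deriv hu.1.absolutelyContinuousOnInterval
    hu.1.memLp_deriv
  rw [hu.apply_zero_and_apply_one.1, zero_smul, zero_add] at hrepr
  exact Lp.ext (hrepr.trans hu2.coeFn_toLp.symm)

end IsSplineDirichlet

theorem toLp_deriv_mem_dirichletSpace_and_neumannSpace (q : ℕ) :
    (∀ u (hu : IsSpline0 m (q + 1) u),
      hu.1.memLp_deriv.toLp ∈ dirichletSpace primitiveOp oneL2 (piecewiseConst m) q) ∧
    ∀ u (hu : IsSplineDirichlet m (q + 1) u),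
      hu.1.memLp_deriv.toLp ∈ neumannSpace primitiveOp oneL2 (piecewiseConst m) q := by
  induction q with
  | zero =>
    simp only [neumannSpace, dirichletSpace]
    exact ⟨fun u hu => hu.1.toLp_deriv_mem_piecewiseConst,
      fun u hu => hu.1.toLp_deriv_mem_piecewiseConst⟩
  | succ q ih =>
    obtain ⟨ihD, ihN⟩ := ih
    constructor
    · intro u hu
      exact mem_dirichletSpace_succ.2 ⟨_, ihN _ hu.deriv, hu.deriv.inner_oneL2_toLp_deriv,
        hu.deriv.primitiveOp_toLp_deriv _⟩
    · intro u hu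
      have hrepr := coeFn_smul_oneL2_add_primitiveOp_deriv
        hu.deriv.1.absolutelyContinuousOnInterval hu.deriv.1.memLp_deriv
      exact mem_neumannSpace_succ.2 ⟨deriv u 0, _, ihD _ hu.deriv,
        Lp.ext (hrepr.trans hu.1.memLp_deriv.coeFn_toLp.symm)⟩

end Spline

/-! ### Primitives of splines -/

lemma exists_derivative_eq_and_natDegree_le (Q : Polynomial ℝ) :
    ∃ A : Polynomial ℝ, A.derivative = Q ∧ A.natDegree ≤ Q.natDegree + 1 := by
  refine ⟨∑ i ∈ Finset.range (Q.natDegree + 1),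
    Polynomial.C (Q.coeff i / (i + 1)) * Polynomial.X ^ (i + 1), ?_, ?_⟩
  · rw [Polynomial.derivative_sum]
    conv_rhs => rw [Q.as_sum_range_C_mul_X_pow]
    refine Finset.sum_congr rfl fun i _ => ?_
    rw [Polynomial.derivative_C_mul_X_pow, Nat.cast_succ, div_mul_cancel₀ _ (by positivity),
      Nat.add_sub_cancel]
  · exact Polynomial.natDegree_sum_le_of_forall_le _ _ fun i hi =>
      (Polynomial.natDegree_C_mul_X_pow_le _ _).trans (Finset.mem_range.1 hi)

lemma integral_eval_derivative (A : Polynomial ℝ) (a b : ℝ) :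
    ∫ t in a..b, A.derivative.eval t = A.eval b - A.eval a :=
  intervalIntegral.integral_eq_sub_of_hasDerivAt (fun t _ => A.hasDerivAt t)
    (A.derivative.continuous.intervalIntegrable _ _)

lemma hasDerivAt_const_add_primitive {G : ℝ → ℝ} (hG : Continuous G) (c x : ℝ) :
    HasDerivAt (fun y => c + primitive G y) (G x) x :=
  (hG.integral_hasStrictDerivAt 0 x).hasDerivAt.const_add c

lemma deriv_const_add_primitive {G : ℝ → ℝ} (hG : Continuous G) (c : ℝ) :
    deriv (fun y => c + primitive G y) = G :=
  funext fun x => (hasDerivAt_const_add_primitive hG c x).deriv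

section Spline

variable {m p : ℕ} [NeZero m] {G : ℝ → ℝ}

lemma exists_const_add_primitive_eq_eval (c : ℝ) {j : ℕ}
    (hint : ∀ a b, IntervalIntegrable G volume a b) {Q : Polynomial ℝ} (hdeg : Q.natDegree ≤ p)
    (hQ : ∀ x ∈ openCell m j, G x = Q.eval x) :
    ∃ q : Polynomial ℝ, q.natDegree ≤ p + 1 ∧
      ∀ x ∈ pieceSet m j, c + primitive G x = q.eval x := by
  obtain ⟨A, rfl, hA⟩ := exists_derivative_eq_and_natDegree_le Q
  refine ⟨A + Polynomial.C (c + primitive G (knot m j) - A.eval (knot m j)), ?_, fun x hx => ?_⟩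
  · rw [Polynomial.natDegree_add_C]; omega
  · have hsplit : primitive G x - primitive G (knot m j) = ∫ t in knot m j..x, G t :=
      intervalIntegral.integral_interval_sub_left (hint _ _) (hint _ _)
    rw [intervalIntegral.integral_congr_uIoo fun t ht =>
        hQ t (uIoo_subset_openCell (knot_mem_pieceSet j) hx ht),
      integral_eval_derivative] at hsplit
    rw [Polynomial.eval_add, Polynomial.eval_C]
    linarith

lemma isSpline_const_add_primitive_comp_cellIndex (c : ℝ) (a : Fin m → ℝ) :
    IsSpline m 1 fun x => c + primitive (fun t => a (cellIndex m t)) x := by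
  have hint := intervalIntegrable_comp_cellIndex a
  refine ⟨?_, fun j hj => exists_const_add_primitive_eq_eval c hint
    (Q := Polynomial.C (a ⟨j, hj⟩)) (by simp) fun x hx => ?_⟩
  · have hcont : Continuous fun x => c + primitive (fun t => a (cellIndex m t)) x :=
      continuous_const.add (intervalIntegral.continuous_primitive hint 0)
    simpa using hcont.continuousOn
  · rw [Polynomial.eval_C, cellIndex_eq_of_mem_openCell (j := ⟨j, hj⟩) hx]

lemma IsSpline.const_add_primitive (hG : IsSpline m (p + 1) G) (c : ℝ) :
    IsSpline m (p + 2) fun x => c + primitive G x := by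
  refine ⟨(contDiffOn_succ_iff_deriv_of_isOpen (n := p) isOpen_Ioo).2 ⟨?_, by simp, ?_⟩,
    fun j hj => ?_⟩
  · exact fun x _ =>
      (hasDerivAt_const_add_primitive hG.continuous c x).differentiableAt.differentiableWithinAt
  · rw [deriv_const_add_primitive hG.continuous]
    exact hG.1
  · obtain ⟨Q, hdeg, hQ⟩ := hG.2 j hj
    exact exists_const_add_primitive_eq_eval c (fun a b => hG.continuous.intervalIntegrable a b)
      hdeg fun x hx => hQ x (openCell_subset_pieceSet j hx)

lemma IsSplineDirichlet.const_add_primitive (hG : IsSplineDirichlet m (p + 1) G) (c : ℝ) :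
    IsSpline0 m (p + 2) fun x => c + primitive G x := by
  refine ⟨hG.1.const_add_primitive c, fun l hl => ?_⟩
  rw [iteratedDeriv_succ', deriv_const_add_primitive hG.1.continuous]
  exact hG.2 l (by omega)

lemma primitive_zero_right (G : ℝ → ℝ) : primitive G 0 = 0 := intervalIntegral.integral_same

protected lemma IsSpline0.primitive (hG : IsSpline0 m (p + 1) G) (hG1 : primitive G 1 = 0) :
    IsSplineDirichlet m (p + 2) (primitive G) := by
  have hderiv : deriv (primitive G) = G := by
    simpa using deriv_const_add_primitive hG.1.continuous 0
  refine ⟨by simpa using hG.1.const_add_primitive 0, fun l hl => ?_⟩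
  cases l with
  | zero => simpa [hG1] using primitive_zero_right G
  | succ l =>
    rw [mul_add_one, iteratedDeriv_succ', hderiv]
    exact hG.2 l (by omega)

theorem exists_ae_eq_of_mem_neumannSpace_and_dirichletSpace (q : ℕ) :
    (∀ w ∈ neumannSpace primitiveOp oneL2 (piecewiseConst m) (q + 1),
      ∃ W, IsSpline0 m (q + 1) W ∧ w =ᵐ[unitMeasure] W) ∧
    ∀ w ∈ dirichletSpace primitiveOp oneL2 (piecewiseConst m) (q + 1),
      ∃ W, IsSplineDirichlet m (q + 1) W ∧ w =ᵐ[unitMeasure] W := by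
  induction q with
  | zero =>
    constructor
    · intro w hw
      obtain ⟨c, g, hg, rfl⟩ := mem_neumannSpace_succ.1 hw
      obtain ⟨a, rfl⟩ := hg
      exact ⟨_, ⟨isSpline_const_add_primitive_comp_cellIndex c a, fun l hl => by omega⟩,
        coeFn_smul_oneL2_add_primitiveOp c (coeFn_stepL2 a)⟩
    · intro w hw
      obtain ⟨g, hg, hinner, rfl⟩ := mem_dirichletSpace_succ.1 hw
      obtain ⟨a, rfl⟩ := hg
      rw [inner_oneL2 (coeFn_stepL2 a)] at hinner
      refine ⟨_, ⟨by simpa using isSpline_const_add_primitive_comp_cellIndex 0 a, fun l hl => ?_⟩,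
        coeFn_primitiveOp (coeFn_stepL2 a)⟩
      obtain rfl : l = 0 := by omega
      simpa [hinner] using primitive_zero_right _
  | succ q ih =>
    obtain ⟨ihN, ihD⟩ := ih
    constructor
    · intro w hw
      obtain ⟨c, g, hg, rfl⟩ := mem_neumannSpace_succ.1 hw
      obtain ⟨G, hG, hgG⟩ := ihD g hg
      exact ⟨_, hG.const_add_primitive c, coeFn_smul_oneL2_add_primitiveOp c hgG⟩
    · intro w hw
      obtain ⟨g, hg, hinner, rfl⟩ := mem_dirichletSpace_succ.1 hw
      obtain ⟨G, hG, hgG⟩ := ihN g hg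
      rw [inner_oneL2 hgG] at hinner
      exact ⟨_, hG.primitive hinner, coeFn_primitiveOp hgG⟩

end Spline

/-! ### The stability estimate -/

lemma h1semi_eq_norm_toLp_deriv {u : ℝ → ℝ} (hu' : MemLp (deriv u) 2 unitMeasure) :
    h1semi u = ‖hu'.toLp‖ := by
  rw [h1semi, h1semiSq, ← norm_sq_eq_integral_of_ae_eq hu'.coeFn_toLp,
    Real.sqrt_sq (norm_nonneg _)]

lemma norm_le_five_mul_norm_of_inner_residual_eq_zero {m q : ℕ} [NeZero m] {c c' : ℝ}
    {g g' : L2Unit} (hg' : g' ∈ dirichletSpace primitiveOp oneL2 (piecewiseConst m) q)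
    (hres : ∀ w ∈ neumannSpace primitiveOp oneL2 (piecewiseConst m) (q + 1),
      ⟪(c • oneL2 + primitiveOp g) - (c' • oneL2 + primitiveOp g'), w⟫_ℝ = 0) :
    ‖g'‖ ≤ 5 * ‖g‖ := by
  have hm : (0 : ℝ) < m := cast_pos_of_neZero
  calc ‖g'‖ ≤ (1 + 4 * m * (1 / m)) * ‖g‖ :=
        integratesByParts_primitiveOp.norm_le_of_inner_residual_eq_zero norm_oneL2 (by positivity)
          (by positivity) oneL2_mem_piecewiseConst exists_piecewiseConst_norm_primitiveOp_sub_le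
          (fun c _ => norm_le_of_mem_piecewiseConst c) hg' hres
    _ = 5 * ‖g‖ := by field_simp; ring

theorem h1_stability_L2proj_general {m p : ℕ} (hm : 1 ≤ m) (hp : 1 ≤ p) {u v : ℝ → ℝ}
    (hu : AbsolutelyContinuousOnInterval u 0 1)
    (hu' : MemLp (deriv u) 2 (volume.restrict (Ioo 0 1))) (hv : IsL2Proj0 m p u v) :
    h1semi v ≤ 5 * h1semi u := by
  have : NeZero m := ⟨by omega⟩
  obtain ⟨q, rfl⟩ : ∃ q, p = q + 1 := ⟨p - 1, by omega⟩
  obtain ⟨hv0, hres⟩ := hv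
  have hv' := hv0.1.memLp_deriv
  rw [h1semi_eq_norm_toLp_deriv hu', h1semi_eq_norm_toLp_deriv hv']
  refine norm_le_five_mul_norm_of_inner_residual_eq_zero (c := u 0) (c' := v 0)
    ((toLp_deriv_mem_dirichletSpace_and_neumannSpace q).1 v hv0) fun w hw => ?_
  obtain ⟨W, hW, hwW⟩ := (exists_ae_eq_of_mem_neumannSpace_and_dirichletSpace q).1 w hw
  have hsub := (Lp.coeFn_sub _ _).trans ((coeFn_smul_oneL2_add_primitiveOp_deriv hu hu').sub
    (coeFn_smul_oneL2_add_primitiveOp_deriv hv0.1.absolutelyContinuousOnInterval hv'))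
  rw [inner_eq_integral_of_ae_eq hsub hwW]
  exact hres W hW

/-- estimate `eq:proof:thm:stable-1d`: there is a constant `c > 0`
independent of the mesh size `h = 1/m` and the spline degree `p` such that the
`L²(0,1)`-orthogonal projector `Q₀` onto `S₀` is `H¹`-stable on the spline space `S`:
`|Q₀u|₁ ≤ c|u|₁` for all `u ∈ S`. -/
theorem h1_stability_L2proj :
    ∃ c : ℝ, 0 < c ∧ ∀ m p : ℕ, 1 ≤ m → 1 ≤ p →
      ∀ u v : ℝ → ℝ, IsSpline m p u → IsL2Proj0 m p u v →
        h1semi v ≤ c * h1semi u := by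
  refine ⟨5, by norm_num, fun m p hm hp u v hu hv => ?_⟩
  have : NeZero m := ⟨by omega⟩
  exact h1_stability_L2proj_general hm hp hu.absolutelyContinuousOnInterval hu.memLp_deriv hv

end SplineMG
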